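/- arXiv:1605.04949 — 4 statements merged into one kernel-verified Lean document; each statement's English description precedes it below -/
import Mathlib

section
/- Two trades T₁ and T₂ are incompatible if and only if σ(T₁) ≠ σ(T₂), |ℓ(T₁)| ≤ |w(T₂)|, and |ℓ(T₂)| ≤ |w(T₁)|. -/
/-- A trade: opening price, winning price, losing price, size. -/
structure Trade where
  op : ℤ
  win : ℤ
  lose : ℤ
  size : ℚ
  deriving DecidableEq

/-- A buy: `w(T) > o(T) > ℓ(T)` and `w(T) > 0 > ℓ(T)`. -/
def Trade.IsBuy (T : Trade) : Prop :=
  T.win > T.op ∧ T.op > T.lose ∧ T.win > 0 ∧ 0 > T.lose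

/-- A sell: `w(T) < o(T) < ℓ(T)` and `w(T) < 0 < ℓ(T)`. -/
def Trade.IsSell (T : Trade) : Prop :=
  T.win < T.op ∧ T.op < T.lose ∧ T.win < 0 ∧ 0 < T.lose

/-- A valid trade has positive size and is either a buy or a sell. -/
def Trade.Valid (T : Trade) : Prop := 0 < T.size ∧ (T.IsBuy ∨ T.IsSell)

/-- The sign of a trade: `1` for a buy, `-1` for a sell. -/
def Trade.sign (T : Trade) : ℤ := if T.op < T.win then 1 else -1

/-- A price path starting at `p`: a nonempty finite sequence of integer prices whose
first element is `p` and in which consecutive prices differ by exactly 1. -/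
def IsPricePath (p : ℤ) (M : List ℤ) : Prop :=
  M ≠ [] ∧ M.head? = some p ∧ M.Chain' (fun a b => b = a + 1 ∨ b = a - 1)

/-- A price movement is a price path starting at `0`. -/
def IsPriceMovement (M : List ℤ) : Prop := IsPricePath 0 M

/-- `w` is reached by `M`, and is reached before `l` is. -/
def ReachesFirst (w l : ℤ) (M : List ℤ) : Prop :=
  ∃ i : Fin M.length, M.get i = w ∧ ∀ j : Fin M.length, (j : ℕ) < (i : ℕ) → M.get j ≠ l

/-- `T` is won by `M`: the winning price is reached first. -/
def Trade.Wins (T : Trade) (M : List ℤ) : Prop := ReachesFirst T.win T.lose M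

/-- `T` is lost by `M`: the losing price is reached first. -/
def Trade.Loses (T : Trade) (M : List ℤ) : Prop := ReachesFirst T.lose T.win M

/-- `M` closes `T`: it reaches at least one of the winning/losing prices. -/
def Trade.ClosedBy (T : Trade) (M : List ℤ) : Prop := T.win ∈ M ∨ T.lose ∈ M

open Classical in
/-- The closing price of `T` under `M`: whichever of `w(T)`, `ℓ(T)` is reached first. -/
noncomputable def Trade.closePrice (T : Trade) (M : List ℤ) : ℤ :=
  if T.Wins M then T.win else T.lose

/-- The broker's profit from `T` under `M`: `σ(T)·(close(T,M) − o(T))·s(T)`. -/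
noncomputable def Trade.profit (T : Trade) (M : List ℤ) : ℚ :=
  ((T.sign * (T.closePrice M - T.op) : ℤ) : ℚ) * T.size

/-- A set of trades is compatible if some price movement closes all of them
and wins all of them. -/
def Compatible (S : Set Trade) : Prop :=
  ∃ M : List ℤ, IsPriceMovement M ∧ (∀ T ∈ S, T.ClosedBy M) ∧ ∀ T ∈ S, T.Wins M

/-!
A price path cannot skip prices: on its way from `0` to `w` it visits every price in between. So if
`T₁` is won first, `T₂` survives only when `ℓ(T₂)` is not between `0` and `w(T₁)`. In that case the
path running straight from `0` to `w(T₁)` and then straight to `w(T₂)` wins both trades, because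
its second leg stays inside the union of the intervals from `0` to `w(T₁)` and from `0` to `w(T₂)`.
Hence `T₁` and `T₂` are incompatible exactly when each losing price lies between `0` and the other
winning price.
-/

theorem reachesFirst_iff_exists_prefix {w l : ℤ} {M : List ℤ} (hwl : w ≠ l) :
    ReachesFirst w l M ↔ ∃ N, N <+: M ∧ w ∈ N ∧ l ∉ N := by
  constructor
  · rintro ⟨i, hw, hl⟩
    refine ⟨M.take (i + 1), M.take_prefix _, ?_, fun hmem => ?_⟩
    · exact List.mem_take_iff_getElem.mpr ⟨i, by omega, hw⟩
    · obtain ⟨j, hj, hjl⟩ := List.mem_take_iff_getElem.mp hmem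
      obtain hji | hji : j < i ∨ j = i := by omega
      · exact hl ⟨j, by omega⟩ hji hjl
      · subst hji
        exact hwl (hw.symm.trans hjl)
  · rintro ⟨N, hNM, hw, hl⟩
    obtain ⟨i, hi, hiw⟩ := List.getElem_of_mem hw
    refine ⟨⟨i, hi.trans_le hNM.length_le⟩, (hNM.getElem hi).symm.trans hiw, fun j hj hjl => ?_⟩
    have hjN : N[(j : ℕ)] = l := (hNM.getElem (hj.trans hi)).trans hjl
    exact hl (hjN ▸ List.getElem_mem _)

theorem ReachesFirst.mem {w l : ℤ} {M : List ℤ} (h : ReachesFirst w l M) : w ∈ M := by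
  obtain ⟨i, rfl, -⟩ := h
  exact List.get_mem M i

namespace IsPricePath

variable {p q r : ℤ} {M N : List ℤ}

theorem singleton (p : ℤ) : IsPricePath p [p] :=
  ⟨List.cons_ne_nil _ _, rfl, List.isChain_singleton p⟩

theorem of_prefix (hM : IsPricePath p M) (hNM : N <+: M) (hN : N ≠ []) : IsPricePath p N := by
  obtain ⟨L, rfl⟩ := hNM
  exact ⟨hN, List.head?_append_of_ne_nil N hN ▸ hM.2.1, hM.2.2.left_of_append⟩

theorem concat (hM : IsPricePath p M) (hq : q ∈ M.getLast?) (hqr : r = q + 1 ∨ r = q - 1) :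
    IsPricePath p (M ++ [r]) := by
  obtain ⟨hne, hhead, hchain⟩ := hM
  refine ⟨by simp, by rwa [List.head?_append_of_ne_nil M hne], ?_⟩
  refine List.isChain_append.mpr ⟨hchain, List.isChain_singleton r, fun x hx y hy => ?_⟩
  obtain rfl := Option.mem_unique hx hq
  obtain rfl := Option.some.inj hy
  exact hqr

theorem uIcc_subset (hM : IsPricePath p M) (hq : q ∈ M) : Set.uIcc p q ⊆ {u | u ∈ M} := by
  obtain ⟨hne, hhead, hchain⟩ := hM
  induction M generalizing p with
  | nil => exact absurd rfl hne
  | cons a M ih =>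
    obtain rfl : a = p := Option.some.inj hhead
    intro u hu
    obtain rfl | hq := List.mem_cons.mp hq
    · rw [Set.uIcc_self] at hu
      exact List.mem_cons.mpr (Or.inl hu)
    · obtain ⟨b, L, rfl⟩ := List.exists_cons_of_ne_nil (List.ne_nil_of_mem hq)
      obtain ⟨hab, hchain⟩ := List.isChain_cons_cons.mp hchain
      have hu : u = a ∨ u ∈ Set.uIcc b q := by
        rw [Set.mem_uIcc] at hu ⊢
        omega
      exact List.mem_cons.mpr (hu.imp_right fun h => ih hq (List.cons_ne_nil b L) rfl hchain h)

theorem exists_extension (hM : IsPricePath p M) (hq : q ∈ M.getLast?) (r : ℤ) :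
    ∃ N, IsPricePath p N ∧ M <+: N ∧ r ∈ N.getLast? ∧
      ∀ u ∈ N, u ∈ M ∨ u ∈ Set.uIcc q r := by
  induction hn : (r - q).natAbs generalizing M q with
  | zero =>
    obtain rfl : r = q := by omega
    exact ⟨M, hM, List.prefix_rfl, hq, fun _ => Or.inl⟩
  | succ n ih =>
    obtain ⟨q', hqq', hn', hq'⟩ :
        ∃ q', (q' = q + 1 ∨ q' = q - 1) ∧ (r - q').natAbs = n ∧ q' ∈ Set.uIcc q r := by
      simp only [Set.mem_uIcc]
      obtain hqr | hrq : q < r ∨ r < q := by omega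
      · exact ⟨q + 1, by omega⟩
      · exact ⟨q - 1, by omega⟩
    obtain ⟨N, hN, hMN, hr, hmem⟩ := ih (hM.concat hq hqq') List.getLast?_concat hn'
    refine ⟨N, hN, (List.prefix_append M [q']).trans hMN, hr, fun u hu => ?_⟩
    obtain hu | hu := hmem u hu
    · exact (List.mem_append.mp hu).imp_right fun h => by rwa [List.mem_singleton.mp h]
    · exact Or.inr (Set.uIcc_subset_uIcc_right hq' hu)

end IsPricePath

section TwoBarriers

variable {p w₁ l₁ w₂ l₂ : ℤ}

theorem exists_isPricePath_reachesFirst_of_notMem (h₁ : l₁ ∉ Set.uIcc p w₁)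
    (h₂ : l₂ ∉ Set.uIcc p w₂) (h₂₁ : l₂ ∉ Set.uIcc p w₁) :
    ∃ M, IsPricePath p M ∧ ReachesFirst w₁ l₁ M ∧ ReachesFirst w₂ l₂ M := by
  obtain ⟨M, hM, -, hw₁, hmemM⟩ := (IsPricePath.singleton p).exists_extension rfl w₁
  have hMsub : ∀ u ∈ M, u ∈ Set.uIcc p w₁ := by
    intro u hu
    obtain hu | hu := hmemM u hu
    · exact List.mem_singleton.mp hu ▸ Set.left_mem_uIcc
    · exact hu
  obtain ⟨N, hN, hMN, hw₂, hmemN⟩ := hM.exists_extension hw₁ w₂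
  have hl₂N : l₂ ∉ N := by
    intro hmem
    obtain hl₂ | hl₂ := hmemN l₂ hmem
    · exact h₂₁ (hMsub l₂ hl₂)
    · obtain hl₂ | hl₂ := Set.uIcc_subset_uIcc_union_uIcc (b := p) hl₂
      · exact h₂₁ (Set.uIcc_comm w₁ p ▸ hl₂)
      · exact h₂ hl₂
  have hne₁ : w₁ ≠ l₁ := ne_of_mem_of_not_mem Set.right_mem_uIcc h₁
  have hne₂ : w₂ ≠ l₂ := ne_of_mem_of_not_mem Set.right_mem_uIcc h₂
  exact ⟨N, hN,
    (reachesFirst_iff_exists_prefix hne₁).mpr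
      ⟨M, hMN, List.mem_of_getLast? hw₁, fun hl₁ => h₁ (hMsub l₁ hl₁)⟩,
    (reachesFirst_iff_exists_prefix hne₂).mpr
      ⟨N, List.prefix_rfl, List.mem_of_getLast? hw₂, hl₂N⟩⟩

theorem exists_isPricePath_reachesFirst_iff (h₁ : l₁ ∉ Set.uIcc p w₁)
    (h₂ : l₂ ∉ Set.uIcc p w₂) :
    (∃ M, IsPricePath p M ∧ ReachesFirst w₁ l₁ M ∧ ReachesFirst w₂ l₂ M) ↔
      l₁ ∉ Set.uIcc p w₂ ∨ l₂ ∉ Set.uIcc p w₁ := by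
  constructor
  · rintro ⟨M, hM, hwins₁, hwins₂⟩
    have hne₁ : w₁ ≠ l₁ := ne_of_mem_of_not_mem Set.right_mem_uIcc h₁
    have hne₂ : w₂ ≠ l₂ := ne_of_mem_of_not_mem Set.right_mem_uIcc h₂
    obtain ⟨N₁, hN₁, hw₁, hl₁⟩ := (reachesFirst_iff_exists_prefix hne₁).mp hwins₁
    obtain ⟨N₂, hN₂, hw₂, hl₂⟩ := (reachesFirst_iff_exists_prefix hne₂).mp hwins₂
    obtain hN | hN := List.prefix_or_prefix_of_prefix hN₁ hN₂
    · have hpath := hM.of_prefix hN₁ (List.ne_nil_of_mem hw₁)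
      exact Or.inr fun hmem => hl₂ (hN.subset (hpath.uIcc_subset hw₁ hmem))
    · have hpath := hM.of_prefix hN₂ (List.ne_nil_of_mem hw₂)
      exact Or.inl fun hmem => hl₁ (hN.subset (hpath.uIcc_subset hw₂ hmem))
  · rintro (h₁₂ | h₂₁)
    · obtain ⟨M, hM, hwins₂, hwins₁⟩ := exists_isPricePath_reachesFirst_of_notMem h₂ h₁ h₁₂
      exact ⟨M, hM, hwins₁, hwins₂⟩
    · exact exists_isPricePath_reachesFirst_of_notMem h₁ h₂ h₂₁

end TwoBarriers

theorem compatible_iff {S : Set Trade} :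
    Compatible S ↔ ∃ M, IsPriceMovement M ∧ ∀ T ∈ S, T.Wins M :=
  ⟨fun ⟨M, hM, _, hwins⟩ => ⟨M, hM, hwins⟩,
    fun ⟨M, hM, hwins⟩ => ⟨M, hM, fun T hT => Or.inl (hwins T hT).mem, hwins⟩⟩

theorem mem_uIcc_zero_iff {a b : ℤ} (ha : a ≠ 0) :
    a ∈ Set.uIcc 0 b ↔ a.sign = b.sign ∧ |a| ≤ |b| := by
  rw [Set.mem_uIcc]
  obtain ha | ha := lt_or_gt_of_ne ha
  · rw [Int.sign_eq_neg_one_of_neg ha, eq_comm, Int.sign_eq_neg_one_iff_neg, abs_of_neg ha,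
      le_abs]
    omega
  · rw [Int.sign_eq_one_of_pos ha, eq_comm, Int.sign_eq_one_iff_pos, abs_of_pos ha, le_abs]
    omega

theorem Trade.neg_sign_eq_iff {T₁ T₂ : Trade} : -T₁.sign = T₂.sign ↔ T₁.sign ≠ T₂.sign := by
  unfold Trade.sign
  split_ifs <;> decide

namespace Trade.Valid

variable {T T₁ T₂ : Trade}

theorem lose_notMem_uIcc_win (h : T.Valid) : T.lose ∉ Set.uIcc 0 T.win := by
  rw [Set.mem_uIcc]
  obtain ⟨-, ⟨-, -, hwin, hlose⟩ | ⟨-, -, hwin, hlose⟩⟩ := h <;> omega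

theorem sign_win (h : T.Valid) : T.win.sign = T.sign := by
  obtain ⟨-, ⟨hop, -, hwin, -⟩ | ⟨hop, -, hwin, -⟩⟩ := h
  · rw [Int.sign_eq_one_of_pos hwin, Trade.sign, if_pos hop]
  · rw [Int.sign_eq_neg_one_of_neg hwin, Trade.sign, if_neg hop.not_gt]

theorem sign_lose (h : T.Valid) : T.lose.sign = -T.sign := by
  obtain ⟨-, ⟨hop, -, -, hlose⟩ | ⟨hop, -, -, hlose⟩⟩ := h
  · rw [Int.sign_eq_neg_one_of_neg hlose, Trade.sign, if_pos hop]
  · rw [Int.sign_eq_one_of_pos hlose, Trade.sign, if_neg hop.not_gt, neg_neg]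

theorem lose_mem_uIcc_win_iff (h₁ : T₁.Valid) (h₂ : T₂.Valid) :
    T₁.lose ∈ Set.uIcc 0 T₂.win ↔ T₁.sign ≠ T₂.sign ∧ |T₁.lose| ≤ |T₂.win| := by
  have hlose : T₁.lose ≠ 0 := fun h => h₁.lose_notMem_uIcc_win (h ▸ Set.left_mem_uIcc)
  rw [mem_uIcc_zero_iff hlose, h₁.sign_lose, h₂.sign_win, Trade.neg_sign_eq_iff]

theorem compatible_pair_iff (h₁ : T₁.Valid) (h₂ : T₂.Valid) :
    Compatible {T₁, T₂} ↔
      T₁.lose ∉ Set.uIcc 0 T₂.win ∨ T₂.lose ∉ Set.uIcc 0 T₁.win := by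
  rw [← exists_isPricePath_reachesFirst_iff h₁.lose_notMem_uIcc_win h₂.lose_notMem_uIcc_win,
    compatible_iff]
  simp only [Set.mem_insert_iff, Set.mem_singleton_iff, forall_eq_or_imp, forall_eq]
  rfl

end Trade.Valid

/-- Two trades `T₁` and `T₂` are incompatible if and only if `σ(T₁) ≠ σ(T₂)`,
`|ℓ(T₁)| ≤ |w(T₂)|`, and `|ℓ(T₂)| ≤ |w(T₁)|`. -/
theorem pair_incompatible_iff (T₁ T₂ : Trade) (h₁ : T₁.Valid) (h₂ : T₂.Valid) :
    ¬ Compatible {T₁, T₂} ↔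
      (T₁.sign ≠ T₂.sign ∧ |T₁.lose| ≤ |T₂.win| ∧ |T₂.lose| ≤ |T₁.win|) := by
  rw [h₁.compatible_pair_iff h₂, not_or, not_not, not_not, h₁.lose_mem_uIcc_win_iff h₂,
    h₂.lose_mem_uIcc_win_iff h₁, ne_comm (a := T₂.sign), ← and_and_left]
end

section
/- Let 𝒯' be a finite nonempty set of trades such that every pair of trades from 𝒯' is compatible. Let p⁺ be the minimum element of {q ∈ {w(T), ℓ(T)} : T ∈ 𝒯', q > 0} and let p⁻ be the maximum element of {q ∈ {w(T), ℓ(T)} : T ∈ 𝒯', q < 0} (both sets are nonempty since every trade has one closing price above 0 and one below 0). Then either every trade T ∈ 𝒯' with p⁺ ∈ {w(T), ℓ(T)} satisfies w(T) = p⁺, or every trade T ∈ 𝒯' with p⁻ ∈ {w(T), ℓ(T)} satisfies w(T) = p⁻. -/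
/-!
Otherwise some trade of `S` loses at `p⁺` and some trade loses at `p⁻`. Extremality of `p⁺` and `p⁻`
puts each of these losing prices between `0` and the winning price of the other trade. Prices move
in unit steps, so a movement reaching one winning price has already met the other trade's losing
price: each trade would have to be won before the other.
-/

namespace IsPricePath

variable {p : ℤ} {M : List ℤ}

theorem exists_le_get_eq_of_mem_uIcc (hM : IsPricePath p M) {c : ℤ} (i : Fin M.length)
    (hc : c ∈ Set.uIcc p (M.get i)) : ∃ j ≤ i, M.get j = c := by
  obtain ⟨-, hhead, hchain⟩ := hM
  obtain ⟨i, hi⟩ := i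
  simp only [Set.mem_uIcc, List.get_eq_getElem] at hc
  induction i with
  | zero =>
    have hstart : M[0] = p := by
      rw [List.head?_eq_getElem?, List.getElem?_eq_getElem hi] at hhead
      exact Option.some.inj hhead
    exact ⟨⟨0, hi⟩, le_rfl, show M[0] = c by omega⟩
  | succ i ih =>
    have hstep : M[i + 1] = M[i] + 1 ∨ M[i + 1] = M[i] - 1 :=
      List.isChain_iff_getElem.mp hchain i hi
    by_cases hic : M[i + 1] = c
    · exact ⟨⟨i + 1, hi⟩, le_rfl, hic⟩
    · obtain ⟨j, hji, hjc⟩ := ih (by omega) (by omega)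
      exact ⟨j, hji.trans (Nat.le_succ i), hjc⟩

theorem le_of_forall_lt_get_ne (hM : IsPricePath p M) {c : ℤ} {i k : Fin M.length}
    (hk : ∀ j < k, M.get j ≠ c) (hc : c ∈ Set.uIcc p (M.get i)) : k ≤ i := by
  obtain ⟨j, hji, hjc⟩ := hM.exists_le_get_eq_of_mem_uIcc i hc
  exact (not_lt.mp fun hjk => hk j hjk hjc).trans hji

theorem eq_of_reachesFirst (hM : IsPricePath p M) {w₁ l₁ w₂ l₂ : ℤ}
    (h₁ : ReachesFirst w₁ l₁ M) (h₂ : ReachesFirst w₂ l₂ M)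
    (hl₁ : l₁ ∈ Set.uIcc p w₂) (hl₂ : l₂ ∈ Set.uIcc p w₁) : w₁ = w₂ := by
  obtain ⟨i₁, rfl, hlose₁⟩ := h₁
  obtain ⟨i₂, rfl, hlose₂⟩ := h₂
  have hi : i₁ = i₂ :=
    le_antisymm (hM.le_of_forall_lt_get_ne hlose₁ hl₁) (hM.le_of_forall_lt_get_ne hlose₂ hl₂)
  rw [hi]

end IsPricePath

theorem Compatible.win_eq_win_of_lose_mem_uIcc {T₁ T₂ : Trade} (h : Compatible {T₁, T₂})
    (h₁ : T₁.lose ∈ Set.uIcc 0 T₂.win) (h₂ : T₂.lose ∈ Set.uIcc 0 T₁.win) :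
    T₁.win = T₂.win := by
  obtain ⟨M, hM, -, hwins⟩ := h
  exact IsPricePath.eq_of_reachesFirst hM (hwins T₁ (Set.mem_insert _ _))
    (hwins T₂ (Set.mem_insert_of_mem _ rfl)) h₁ h₂

namespace Trade.Valid

variable {T : Trade}

theorem win_neg_of_lose_pos (hT : T.Valid) (h : 0 < T.lose) : T.win < 0 := by
  rcases hT with ⟨-, ⟨-, -, -, hlose⟩ | ⟨-, -, hwin, -⟩⟩
  · exact absurd h hlose.not_gt
  · exact hwin

theorem win_pos_of_lose_neg (hT : T.Valid) (h : T.lose < 0) : 0 < T.win := by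
  rcases hT with ⟨-, ⟨-, -, hwin, -⟩ | ⟨-, -, -, hlose⟩⟩
  · exact hwin
  · exact absurd h hlose.not_gt

end Trade.Valid

theorem min_or_max_closing_price_all_winning_general {S : Set Trade} (hval : ∀ T ∈ S, T.Valid)
    (hpair : ∀ T₁ ∈ S, ∀ T₂ ∈ S, Compatible {T₁, T₂}) {pplus pminus : ℤ}
    (hplus : IsLeast {q : ℤ | 0 < q ∧ ∃ T ∈ S, q = T.win ∨ q = T.lose} pplus)
    (hminus : IsGreatest {q : ℤ | q < 0 ∧ ∃ T ∈ S, q = T.win ∨ q = T.lose} pminus) :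
    (∀ T ∈ S, (pplus = T.win ∨ pplus = T.lose) → T.win = pplus) ∨
    (∀ T ∈ S, (pminus = T.win ∨ pminus = T.lose) → T.win = pminus) := by
  by_contra! h
  obtain ⟨⟨T₁, hT₁, hclose₁, hwin₁⟩, T₂, hT₂, hclose₂, hwin₂⟩ := h
  obtain rfl : pplus = T₁.lose := hclose₁.resolve_left hwin₁.symm
  obtain rfl : pminus = T₂.lose := hclose₂.resolve_left hwin₂.symm
  have hsell : T₁.win < 0 := (hval T₁ hT₁).win_neg_of_lose_pos hplus.1.1
  have hbuy : 0 < T₂.win := (hval T₂ hT₂).win_pos_of_lose_neg hminus.1.1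
  have hle₁ : T₁.lose ≤ T₂.win := hplus.2 ⟨hbuy, T₂, hT₂, .inl rfl⟩
  have hle₂ : T₁.win ≤ T₂.lose := hminus.2 ⟨hsell, T₁, hT₁, .inl rfl⟩
  have hwin : T₁.win = T₂.win := (hpair T₁ hT₁ T₂ hT₂).win_eq_win_of_lose_mem_uIcc
    (Set.mem_uIcc_of_le hplus.1.1.le hle₁) (Set.mem_uIcc_of_ge hle₂ hminus.1.1.le)
  exact (hsell.trans hbuy).ne hwin

/-- Let `S` be a finite nonempty pairwise-compatible set of trades, `p⁺` the minimum
closing price of a trade of `S` above `0`, and `p⁻` the maximum closing price of a trade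
of `S` below `0`.  Then either every trade of `S` having `p⁺` as one of its closing prices
wins at `p⁺`, or every trade of `S` having `p⁻` as one of its closing prices wins at `p⁻`. -/
theorem min_or_max_closing_price_all_winning (S : Set Trade) (hfin : S.Finite)
    (hne : S.Nonempty) (hval : ∀ T ∈ S, T.Valid)
    (hpair : ∀ T₁ ∈ S, ∀ T₂ ∈ S, Compatible {T₁, T₂})
    (pplus pminus : ℤ)
    (hplus : IsLeast {q : ℤ | 0 < q ∧ ∃ T ∈ S, q = T.win ∨ q = T.lose} pplus)
    (hminus : IsGreatest {q : ℤ | q < 0 ∧ ∃ T ∈ S, q = T.win ∨ q = T.lose} pminus) :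
    (∀ T ∈ S, (pplus = T.win ∨ pplus = T.lose) → T.win = pplus) ∨
    (∀ T ∈ S, (pminus = T.win ∨ pminus = T.lose) → T.win = pminus) :=
  min_or_max_closing_price_all_winning_general hval hpair hplus hminus
end

section
/- Let 𝒯 be a finite set of trades with a generalized profit function π̂, and assign to each trade T the weight f(T) = π̂_w(T) − π̂_ℓ(T). Then a subset 𝒯' ⊆ 𝒯 is an optimal set of winning trades (i.e., 𝒯' is compatible and maximizes ∑_{T ∈ 𝒯'} π̂_w(T) + ∑_{T ∈ 𝒯∖𝒯'} π̂_ℓ(T) over all compatible subsets of 𝒯) if and only if 𝒯' is a maximum f-weight independent set of the incompatibility graph G(𝒯) (i.e., 𝒯' is an independent set of G(𝒯) and ∑_{T ∈ 𝒯'} f(T) ≥ ∑_{T ∈ I} f(T) for every independent set I of G(𝒯)). -/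
/-- A generalized profit function: assigns to each trade a positive winning profit
`pw T` and a negative losing profit `pl T`. -/
structure ProfitFn where
  pw : Trade → ℚ
  pl : Trade → ℚ
  pw_pos : ∀ T, 0 < pw T
  pl_neg : ∀ T, pl T < 0

open Classical in
/-- The generalized profit of `T` under `M`: `pw T` if `T` is won, `pl T` if lost. -/
noncomputable def ProfitFn.profit (π : ProfitFn) (T : Trade) (M : List ℤ) : ℚ :=
  if T.Wins M then π.pw T else π.pl T

/-- `I` is an independent set of the incompatibility graph `G(𝒯)`: a subset of `𝒯`
no two distinct elements of which are incompatible (i.e. adjacent in `G(𝒯)`). -/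
def IsIndepSet (𝒯 I : Finset Trade) : Prop :=
  I ⊆ 𝒯 ∧ ∀ T₁ ∈ I, ∀ T₂ ∈ I, T₁ ≠ T₂ → Compatible {T₁, T₂}

/-!
The losing price of a trade cuts the price axis into two half-lines; the one containing the
winning price is its safe side. If two trades are both won, then the winning price of the one won
first lies on the safe side of the other. Conversely, if this holds in one order for each pair of
a nonempty finite set, then some winning price lies on every safe side. The lowest winning price
of a buy does, unless it misses the safe side of some sell; then so does the winning price of
every buy, and hence the winning price of that sell lies on the safe side of every buy. If there
is no buy, every winning price lies on every safe side. Moving straight to such a price loses no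
trade, so by induction all of them can be won: compatibility is a pairwise property. Hence the
compatible subsets are the independent sets, and the total profit differs from the weight by the
constant `∑_{T∈𝒯} π̂_ℓ(T)`.
-/

theorem reachesFirst_cons {w l p : ℤ} {M : List ℤ} :
    ReachesFirst w l (p :: M) ↔ p = w ∨ (p ≠ l ∧ ReachesFirst w l M) := by
  simp only [ReachesFirst, List.length_cons, Fin.exists_fin_succ, Fin.forall_fin_succ,
    List.get_cons_zero, List.get_cons_succ']
  simp [and_left_comm]

theorem not_reachesFirst_nil {w l : ℤ} : ¬ ReachesFirst w l [] :=
  fun ⟨i, _⟩ => i.elim0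

theorem isPricePath_iff {p : ℤ} {M : List ℤ} :
    IsPricePath p M ↔
      ∃ N, M = p :: N ∧ (p :: N).IsChain (fun a b => b = a + 1 ∨ b = a - 1) := by
  constructor
  · rintro ⟨-, hhead, hchain⟩
    obtain ⟨N, rfl⟩ := List.head?_eq_some_iff.mp hhead
    exact ⟨N, rfl, hchain⟩
  · rintro ⟨N, rfl, hchain⟩
    exact ⟨List.cons_ne_nil p N, rfl, hchain⟩

theorem IsPricePath.cons {p q : ℤ} {M : List ℤ} (h : IsPricePath q M)
    (hpq : q = p + 1 ∨ q = p - 1) : IsPricePath p (p :: M) := by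
  obtain ⟨N, rfl, hchain⟩ := isPricePath_iff.mp h
  exact isPricePath_iff.mpr ⟨q :: N, rfl, List.isChain_cons_cons.mpr ⟨hpq, hchain⟩⟩

theorem isPricePath_singleton (p : ℤ) : IsPricePath p [p] :=
  isPricePath_iff.mpr ⟨[], rfl, List.isChain_singleton p⟩

/-- The trades of `S` can all be won by one price path starting at `p`. This is compatibility with
the starting price left free, as an induction along the path requires. -/
def WinnableFrom (p : ℤ) (S : Set Trade) : Prop :=
  ∃ M, IsPricePath p M ∧ ∀ T ∈ S, T.Wins M

theorem compatible_iff_winnableFrom_zero {S : Set Trade} : Compatible S ↔ WinnableFrom 0 S :=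
  ⟨fun ⟨M, hM, _, hwins⟩ => ⟨M, hM, hwins⟩,
    fun ⟨M, hM, hwins⟩ => ⟨M, hM, fun T hT => Or.inl (hwins T hT).mem, hwins⟩⟩

namespace WinnableFrom

variable {p q : ℤ} {S S' : Set Trade}

theorem empty (p : ℤ) : WinnableFrom p ∅ :=
  ⟨[p], isPricePath_singleton p, by simp⟩

theorem mono (h : WinnableFrom p S') (hS : S ⊆ S') : WinnableFrom p S := by
  obtain ⟨M, hM, hwins⟩ := h
  exact ⟨M, hM, fun T hT => hwins T (hS hT)⟩

theorem of_diff_singleton {T : Trade} (h : WinnableFrom T.win (S \ {T})) :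
    WinnableFrom T.win S := by
  obtain ⟨M, hM, hwins⟩ := h
  refine ⟨M, hM, fun R hR => ?_⟩
  by_cases hRT : R = T
  · obtain ⟨N, rfl, -⟩ := isPricePath_iff.mp hM
    exact reachesFirst_cons.mpr (Or.inl (congrArg Trade.win hRT.symm))
  · exact hwins R ⟨hR, hRT⟩

theorem of_step (h : WinnableFrom q S) (hpq : q = p + 1 ∨ q = p - 1)
    (hp : ∀ T ∈ S, p ≠ T.lose) : WinnableFrom p S := by
  obtain ⟨M, hM, hwins⟩ := h
  exact ⟨p :: M, hM.cons hpq,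
    fun T hT => reachesFirst_cons.mpr (Or.inr ⟨hp T hT, hwins T hT⟩)⟩

theorem of_uIcc (h : WinnableFrom q S) (hlose : ∀ T ∈ S, T.lose ∉ Set.uIcc p q) :
    WinnableFrom p S := by
  simp only [Set.mem_uIcc, not_or, not_and] at hlose
  induction hn : (q - p).natAbs generalizing p with
  | zero =>
    obtain rfl : q = p := by lia
    exact h
  | succ n ih =>
    have hp : ∀ T ∈ S, p ≠ T.lose := fun T hT => by grind
    obtain hpq | hqp : p < q ∨ q < p := by lia
    · exact (ih (p := p + 1) (by grind) (by lia)).of_step (Or.inl rfl) hp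
    · exact (ih (p := p - 1) (by grind) (by lia)).of_step (Or.inr rfl) hp

end WinnableFrom

namespace Trade

variable {T R : Trade}

/-- The half-line of prices lying strictly on the same side of the losing price as the winning
price. A price path that stays in it does not lose the trade. For `T.win = T.lose`, which no buy
or sell satisfies, the value is arbitrary. -/
def safeSide (T : Trade) : Set ℤ :=
  if T.lose < T.win then Set.Ioi T.lose else Set.Iio T.lose

theorem IsBuy.mem_safeSide (hT : T.IsBuy) {x : ℤ} : x ∈ T.safeSide ↔ T.lose < x := by
  rw [safeSide, if_pos (hT.2.1.trans hT.1), Set.mem_Ioi]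

theorem IsSell.mem_safeSide (hT : T.IsSell) {x : ℤ} : x ∈ T.safeSide ↔ x < T.lose := by
  rw [safeSide, if_neg (hT.1.trans hT.2.1).not_gt, Set.mem_Iio]

theorem IsBuy.win_mem_safeSide (hT : T.IsBuy) (hR : R.IsBuy) : T.win ∈ R.safeSide :=
  hR.mem_safeSide.mpr (hR.2.2.2.trans hT.2.2.1)

theorem IsSell.win_mem_safeSide (hT : T.IsSell) (hR : R.IsSell) : T.win ∈ R.safeSide :=
  hR.mem_safeSide.mpr (hT.2.2.1.trans hR.2.2.2)

theorem zero_mem_safeSide (hT : T.IsBuy ∨ T.IsSell) : 0 ∈ T.safeSide :=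
  hT.elim (fun h => h.mem_safeSide.mpr h.2.2.2) (fun h => h.mem_safeSide.mpr h.2.2.2)

theorem win_ne_lose (hT : T.IsBuy ∨ T.IsSell) : T.win ≠ T.lose :=
  hT.elim (fun h => (h.2.1.trans h.1).ne') (fun h => (h.1.trans h.2.1).ne)

theorem lose_notMem_safeSide (T : Trade) : T.lose ∉ T.safeSide := by
  unfold safeSide
  split_ifs <;> simp

theorem ordConnected_safeSide (T : Trade) : T.safeSide.OrdConnected := by
  unfold safeSide
  split_ifs
  exacts [Set.ordConnected_Ioi, Set.ordConnected_Iio]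

theorem mem_safeSide_of_step {p q : ℤ} (hp : p ∈ T.safeSide) (hpq : q = p + 1 ∨ q = p - 1)
    (hq : q ≠ T.lose) : q ∈ T.safeSide := by
  unfold safeSide at hp ⊢
  split_ifs at hp ⊢ <;> simp only [Set.mem_Ioi, Set.mem_Iio] at hp ⊢ <;> lia

theorem Wins.head_ne_lose {p : ℤ} {M : List ℤ} (h : T.Wins (p :: M)) (hT : T.win ≠ T.lose) :
    p ≠ T.lose :=
  (reachesFirst_cons.mp h).elim (fun hp => hp ▸ hT) And.left

theorem win_mem_safeSide_or_of_winnableFrom {p : ℤ} (hT : T.win ≠ T.lose) (hR : R.win ≠ R.lose)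
    (hpT : p ∈ T.safeSide) (hpR : p ∈ R.safeSide) (h : WinnableFrom p {T, R}) :
    T.win ∈ R.safeSide ∨ R.win ∈ T.safeSide := by
  obtain ⟨M, hM, hwins⟩ := h
  obtain ⟨N, rfl, hchain⟩ := isPricePath_iff.mp hM
  have hwinT : T.Wins (p :: N) := hwins T (by simp)
  have hwinR : R.Wins (p :: N) := hwins R (by simp)
  clear hM hwins
  induction N generalizing p with
  | nil =>
    have hp : p = T.win := (reachesFirst_cons.mp hwinT).resolve_right
      fun h => not_reachesFirst_nil h.2
    exact Or.inl (hp ▸ hpR)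
  | cons q N ih =>
    obtain ⟨hstep, hchain⟩ := List.isChain_cons_cons.mp hchain
    rcases reachesFirst_cons.mp hwinT with rfl | ⟨-, htailT : T.Wins (q :: N)⟩
    · exact Or.inl hpR
    rcases reachesFirst_cons.mp hwinR with rfl | ⟨-, htailR : R.Wins (q :: N)⟩
    · exact Or.inr hpT
    exact ih (mem_safeSide_of_step hpT hstep (htailT.head_ne_lose hT))
      (mem_safeSide_of_step hpR hstep (htailR.head_ne_lose hR)) hchain htailT htailR

end Trade

theorem WinnableFrom.of_mem_safeSide {p q : ℤ} {S : Set Trade} (h : WinnableFrom q S)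
    (hp : ∀ T ∈ S, p ∈ T.safeSide) (hq : ∀ T ∈ S, q ∈ T.safeSide) : WinnableFrom p S :=
  h.of_uIcc fun T hT hmem =>
    T.lose_notMem_safeSide (T.ordConnected_safeSide.uIcc_subset (hp T hT) (hq T hT) hmem)

theorem exists_win_mem_forall_safeSide {S : Finset Trade} (hne : S.Nonempty)
    (hdir : ∀ T ∈ S, T.IsBuy ∨ T.IsSell)
    (hpair : (S : Set Trade).Pairwise fun T R => T.win ∈ R.safeSide ∨ R.win ∈ T.safeSide) :
    ∃ T ∈ S, ∀ R ∈ S, T.win ∈ R.safeSide := by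
  classical
  by_cases hbuy : ∃ B ∈ S, B.IsBuy
  · obtain ⟨B, hB, hmin⟩ := (S.filter Trade.IsBuy).exists_min_image Trade.win
      (Finset.filter_nonempty_iff.mpr hbuy)
    obtain ⟨hBS, hBbuy⟩ := Finset.mem_filter.mp hB
    by_cases hsafe : ∀ R ∈ S, B.win ∈ R.safeSide
    · exact ⟨B, hBS, hsafe⟩
    push Not at hsafe
    obtain ⟨R, hRS, hBR⟩ := hsafe
    have hRsell : R.IsSell := (hdir R hRS).resolve_left fun h =>
      hBR (hBbuy.win_mem_safeSide h)
    have hbuys_notMem : ∀ T ∈ S, T.IsBuy → T.win ∉ R.safeSide := fun T hTS hT hmem =>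
      hBR (hRsell.mem_safeSide.mpr ((hmin T (Finset.mem_filter.mpr ⟨hTS, hT⟩)).trans_lt
        (hRsell.mem_safeSide.mp hmem)))
    refine ⟨R, hRS, fun T hTS => ?_⟩
    rcases hdir T hTS with hT | hT
    · have hTR : T ≠ R := by
        rintro rfl
        exact lt_asymm hT.1 hRsell.1
      exact (hpair hTS hRS hTR).resolve_left (hbuys_notMem T hTS hT)
    · exact hRsell.win_mem_safeSide hT
  · push Not at hbuy
    have hsell : ∀ T ∈ S, T.IsSell := fun T hT => (hdir T hT).resolve_left (hbuy T hT)
    obtain ⟨T, hT⟩ := hne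
    exact ⟨T, hT, fun R hR => (hsell T hT).win_mem_safeSide (hsell R hR)⟩

theorem winnableFrom_of_pairwise {S : Finset Trade} {p : ℤ}
    (hdir : ∀ T ∈ S, T.IsBuy ∨ T.IsSell)
    (hpair : (S : Set Trade).Pairwise fun T R => T.win ∈ R.safeSide ∨ R.win ∈ T.safeSide)
    (hp : ∀ T ∈ S, p ∈ T.safeSide) : WinnableFrom p S := by
  induction S using Finset.strongInduction generalizing p with
  | H S ih =>
    rcases S.eq_empty_or_nonempty with rfl | hne
    · simpa using WinnableFrom.empty p
    obtain ⟨T, hT, hsafe⟩ := exists_win_mem_forall_safeSide hne hdir hpair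
    have herase : S.erase T ⊆ S := Finset.erase_subset T S
    have hrest : WinnableFrom T.win (S.erase T) :=
      ih (S.erase T) (Finset.erase_ssubset hT) (fun R hR => hdir R (herase hR))
        (hpair.mono (Finset.coe_subset.mpr herase)) fun R hR => hsafe R (herase hR)
    rw [Finset.coe_erase] at hrest
    exact hrest.of_diff_singleton.of_mem_safeSide hp hsafe

theorem compatible_iff_pairwise_compatible {S : Finset Trade}
    (hdir : ∀ T ∈ S, T.IsBuy ∨ T.IsSell) :
    Compatible (S : Set Trade) ↔ (S : Set Trade).Pairwise fun T R => Compatible {T, R} := by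
  simp only [compatible_iff_winnableFrom_zero]
  refine ⟨fun h T hT R hR _ => h.mono (Set.pair_subset hT hR), fun hpair => ?_⟩
  refine winnableFrom_of_pairwise hdir (fun T hT R hR hTR => ?_)
    fun T hT => Trade.zero_mem_safeSide (hdir T hT)
  exact Trade.win_mem_safeSide_or_of_winnableFrom (Trade.win_ne_lose (hdir T hT))
    (Trade.win_ne_lose (hdir R hR)) (Trade.zero_mem_safeSide (hdir T hT))
    (Trade.zero_mem_safeSide (hdir R hR)) (hpair hT hR hTR)

theorem isIndepSet_iff_compatible {𝒯 S : Finset Trade} (hdir : ∀ T ∈ 𝒯, T.IsBuy ∨ T.IsSell) :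
    IsIndepSet 𝒯 S ↔ S ⊆ 𝒯 ∧ Compatible (S : Set Trade) :=
  and_congr_right fun hS =>
    (compatible_iff_pairwise_compatible fun T hT => hdir T (hS hT)).symm

theorem sum_add_sum_sdiff_eq_sum_sub_add_sum {ι G : Type*} [DecidableEq ι] [AddCommGroup G]
    {s t : Finset ι} (hst : s ⊆ t) (f g : ι → G) :
    ∑ i ∈ s, f i + ∑ i ∈ t \ s, g i = ∑ i ∈ s, (f i - g i) + ∑ i ∈ t, g i := by
  rw [← Finset.sum_sdiff hst (f := g), Finset.sum_sub_distrib]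
  abel

theorem optimal_winning_iff_max_weight_indep_general {G : Type*} [AddCommGroup G] [Preorder G]
    [IsOrderedAddMonoid G] (pw pl : Trade → G) (𝒯 𝒯' : Finset Trade)
    (hdir : ∀ T ∈ 𝒯, T.IsBuy ∨ T.IsSell) (hsub : 𝒯' ⊆ 𝒯) :
    (Compatible (↑𝒯' : Set Trade) ∧
      ∀ S ⊆ 𝒯, Compatible (↑S : Set Trade) →
        ∑ T ∈ S, pw T + ∑ T ∈ 𝒯 \ S, pl T
          ≤ ∑ T ∈ 𝒯', pw T + ∑ T ∈ 𝒯 \ 𝒯', pl T)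
    ↔ (IsIndepSet 𝒯 𝒯' ∧
      ∀ I : Finset Trade, IsIndepSet 𝒯 I →
        ∑ T ∈ I, (pw T - pl T) ≤ ∑ T ∈ 𝒯', (pw T - pl T)) := by
  simp only [isIndepSet_iff_compatible hdir, hsub, true_and, and_imp]
  refine and_congr_right fun _ => forall₃_congr fun S hS _ => ?_
  rw [sum_add_sum_sdiff_eq_sum_sub_add_sum hS, sum_add_sum_sdiff_eq_sum_sub_add_sum hsub,
    add_le_add_iff_right]

/-- With each trade weighted by `f(T) = π̂_w(T) − π̂_ℓ(T)`, a subset `𝒯' ⊆ 𝒯` is an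
optimal set of winning trades (compatible, and maximizing the total profit
`∑_{T ∈ 𝒯'} π̂_w(T) + ∑_{T ∈ 𝒯∖𝒯'} π̂_ℓ(T)` among compatible subsets of `𝒯`) if and
only if `𝒯'` is a maximum `f`-weight independent set of the incompatibility graph `G(𝒯)`. -/
theorem optimal_winning_iff_max_weight_indep (π : ProfitFn)
    (𝒯 𝒯' : Finset Trade) (hval : ∀ T ∈ 𝒯, T.Valid) (hsub : 𝒯' ⊆ 𝒯) :
    (Compatible (↑𝒯' : Set Trade) ∧
      ∀ S ⊆ 𝒯, Compatible (↑S : Set Trade) →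
        ∑ T ∈ S, π.pw T + ∑ T ∈ 𝒯 \ S, π.pl T
          ≤ ∑ T ∈ 𝒯', π.pw T + ∑ T ∈ 𝒯 \ 𝒯', π.pl T)
    ↔ (IsIndepSet 𝒯 𝒯' ∧
      ∀ I : Finset Trade, IsIndepSet 𝒯 I →
        ∑ T ∈ I, (π.pw T - π.pl T) ≤ ∑ T ∈ 𝒯', (π.pw T - π.pl T)) :=
  optimal_winning_iff_max_weight_indep_general π.pw π.pl 𝒯 𝒯' (fun T hT => (hval T hT).2) hsub
end

section
/- Let n ≥ 1 and let X₁, …, Xₙ be real numbers such that ∑_{i=1}^{n} i·Xᵢ > 0. Then for all real numbers a, c > 0, there exists m with 1 ≤ m ≤ n such that ∑_{i=1}^{m} (a + c·i)·i·Xᵢ > 0. -/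
/-!
Let `S k` and `T k` be the sums of `y i` and of `w i • y i` over the indices `i ≤ k`, and suppose
that no `T k` is positive. Then `w k • S k ≤ T k ≤ 0` for every `k`, by induction: once `S k ≤ 0` is
known, raising the weight from `w k` to the next weight `w l` only lowers the left-hand side, and
adding `w l • y l` to both sides gives the inequality at `l`. As the weights are positive, all the
sums `S k` are nonpositive.
-/

open Finset

section

variable {ι R M : Type*} [LinearOrder ι] [Ring R] [PartialOrder R] [IsOrderedAddMonoid R]
  [AddCommGroup M] [Module R M]

theorem smul_le_smul_of_nonpos_right [PartialOrder M] [IsOrderedAddMonoid M] [PosSMulMono R M]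
    {a b : R} {x : M} (hab : a ≤ b) (hx : x ≤ 0) : b • x ≤ a • x := by
  rw [← sub_nonpos, ← sub_smul]
  exact smul_nonpos_of_nonneg_of_nonpos (sub_nonneg.2 hab) hx

variable {s : Finset ι} {w : ι → R} {y : ι → M}

theorem smul_sum_le_sum_smul_of_forall_partial_sum_nonpos [PartialOrder M] [IsOrderedAddMonoid M]
    [PosSMulMono R M] [PosSMulReflectLE R M] (hw : ∀ i ∈ s, 0 < w i) (hmono : MonotoneOn w s)
    (hpartial : ∀ m ∈ s, ∑ i ∈ s with i ≤ m, w i • y i ≤ 0) {c : R} (hc : ∀ i ∈ s, w i ≤ c) :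
    c • ∑ i ∈ s, y i ≤ ∑ i ∈ s, w i • y i := by
  induction s using Finset.induction_on_max generalizing c with
  | empty => simp
  | insert l t hlt ih =>
    have hl : l ∈ insert l t := mem_insert_self l t
    have hsub : t ⊆ insert l t := subset_insert l t
    have hlast : l ∉ t := fun h => (hlt l h).false
    have hle : ∀ i ∈ insert l t, i ≤ l := by grind
    have hpartial_t : ∀ m ∈ t, ∑ i ∈ t with i ≤ m, w i • y i ≤ 0 := fun m hm => by
      simpa only [filter_insert, if_neg (hlt m hm).not_ge] using hpartial m (hsub hm)
    have ht : w l • ∑ i ∈ t, y i ≤ ∑ i ∈ t, w i • y i :=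
      ih (fun i hi => hw i (hsub hi)) (hmono.mono hsub) hpartial_t
        fun i hi => hmono (hsub hi) hl (hlt i hi).le
    have htop : w l • ∑ i ∈ insert l t, y i ≤ ∑ i ∈ insert l t, w i • y i := by
      rw [sum_insert hlast, sum_insert hlast, smul_add]
      gcongr
    have hweighted : ∑ i ∈ insert l t, w i • y i ≤ 0 := by
      simpa only [filter_true_of_mem hle] using hpartial l hl
    have hsum : ∑ i ∈ insert l t, y i ≤ 0 :=
      nonpos_of_smul_nonpos_of_pos_left (htop.trans hweighted) (hw l hl)
    exact (smul_le_smul_of_nonpos_right (hc l hl) hsum).trans htop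

theorem exists_positive_weighted_partial_sum_general [LinearOrder M] [IsOrderedAddMonoid M]
    [PosSMulStrictMono R M] (hw : ∀ i ∈ s, 0 < w i) (hmono : MonotoneOn w s)
    (hpos : 0 < ∑ i ∈ s, y i) : ∃ m ∈ s, 0 < ∑ i ∈ s with i ≤ m, w i • y i := by
  by_contra! hpartial
  have hs : s.Nonempty := nonempty_of_sum_ne_zero hpos.ne'
  have hmax : s.max' hs ∈ s := s.max'_mem hs
  have hle : ∀ i ∈ s, i ≤ s.max' hs := fun i hi => s.le_max' i hi
  have htop : w (s.max' hs) • ∑ i ∈ s, y i ≤ ∑ i ∈ s, w i • y i :=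
    smul_sum_le_sum_smul_of_forall_partial_sum_nonpos hw hmono hpartial fun i hi =>
      hmono hi hmax (hle i hi)
  have hweighted : ∑ i ∈ s, w i • y i ≤ 0 := by
    simpa only [filter_true_of_mem hle] using hpartial _ hmax
  exact hpos.not_ge (nonpos_of_smul_nonpos_of_pos_left (htop.trans hweighted) (hw _ hmax))

end

/-- If `∑_{i=1}^{n} i·Xᵢ > 0`, then for all reals `a, c > 0` there exists `1 ≤ m ≤ n`
such that `∑_{i=1}^{m} (a + c·i)·i·Xᵢ > 0`. -/
theorem exists_positive_weighted_partial_sum (n : ℕ) (hn : 1 ≤ n) (X : ℕ → ℝ)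
    (h : 0 < ∑ i ∈ Finset.Icc 1 n, (i : ℝ) * X i)
    (a c : ℝ) (ha : 0 < a) (hc : 0 < c) :
    ∃ m, 1 ≤ m ∧ m ≤ n ∧ 0 < ∑ i ∈ Finset.Icc 1 m, (a + c * (i : ℝ)) * ((i : ℝ) * X i) := by
  have hmono : Monotone fun i : ℕ => a + c * (i : ℝ) := fun i j hij => by dsimp only; gcongr
  obtain ⟨m, hm, hpos⟩ := exists_positive_weighted_partial_sum_general
    (fun i _ => by positivity) (hmono.monotoneOn _) h
  have hIcc : {i ∈ Icc 1 n | i ≤ m} = Icc 1 m := by grind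
  rw [hIcc] at hpos
  exact ⟨m, (mem_Icc.1 hm).1, (mem_Icc.1 hm).2, hpos⟩
end
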